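/- arXiv:1708.03115 — 3 statements merged into one kernel-verified Lean document; each statement's English description precedes it below -/
import Mathlib

section
/- Let α > 0, β ∈ ℝ, a > 0, ξ > 0, N ≥ 0 be real numbers and let S(I) = −((I+N)/(α·a))·(log(α/(2ξ(I+N)) − 1 − √((1 − α/(2ξ(I+N)))² − 1)) − α·β) be the best-reply power as a function of the interference I. Then for every I with I + N > 0 and 0 < 4ξ(I+N) < α, S is differentiable at I with derivative S′(I) = β/a − 1/(a·√(α(α − 4ξ(I+N)))) − (1/(α·a))·log(x − √(x² − 1)), where x = α/(2ξ(I+N)) − 1 (Eq. (19) of the paper). -/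
/-!
For `x ≥ 1` the numbers `x ± √(x ^ 2 - 1)` are mutually inverse, so the logarithm in the best reply
is `-arcosh x`, whose derivative is `-1 / √(x ^ 2 - 1)`. In the variable `p = 2ξ(I + N)` one has
`x = α / p - 1`, and the best reply is a linear combination of `p` and `p * arcosh (α / p - 1)`.
-/

open Real

theorem log_self_sub_sqrt_sq_sub_one {x : ℝ} (hx : 1 ≤ x) :
    log (x - √(x ^ 2 - 1)) = -arcosh x := by
  rw [← add_sqrt_self_sq_sub_one_inv hx, log_inv, arcosh]

theorem hasDerivAt_log_self_sub_sqrt_sq_sub_one {x : ℝ} (hx : 1 < x) :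
    HasDerivAt (fun y ↦ log (y - √(y ^ 2 - 1))) (-(√(x ^ 2 - 1))⁻¹) x := by
  refine (hasDerivAt_arcosh hx).neg.congr_of_eventuallyEq ?_
  filter_upwards [eventually_gt_nhds hx] with y hy
  exact log_self_sub_sqrt_sq_sub_one hy.le

section DivSubOne

variable {c p : ℝ}

theorem one_lt_div_sub_one_iff (hp : 0 < p) : 1 < c / p - 1 ↔ 2 * p < c := by
  rw [lt_sub_iff_add_lt, one_add_one_eq_two, lt_div_iff₀ hp]

theorem sqrt_div_sub_one_sq_sub_one (hp : 0 < p) :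
    √((c / p - 1) ^ 2 - 1) = √(c * (c - 2 * p)) / p := by
  have hsq : (c / p - 1) ^ 2 - 1 = c * (c - 2 * p) / p ^ 2 := by
    field_simp
    ring
  rw [hsq, sqrt_div' _ (sq_nonneg p), sqrt_sq hp.le]

theorem hasDerivAt_mul_log_div_sub_one_sub_sqrt (hp : 0 < p) (hpc : 2 * p < c) :
    HasDerivAt (fun q ↦ q * log (c / q - 1 - √((c / q - 1) ^ 2 - 1)))
      (log (c / p - 1 - √((c / p - 1) ^ 2 - 1)) + c / √(c * (c - 2 * p))) p := by
  have hdiv : HasDerivAt (fun q ↦ c / q - 1) (-c / p ^ 2) p := by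
    simpa using ((hasDerivAt_const p c).fun_div (hasDerivAt_id' p) hp.ne').sub_const 1
  have hlog := (hasDerivAt_log_self_sub_sqrt_sq_sub_one
    ((one_lt_div_sub_one_iff hp).2 hpc)).comp p hdiv
  refine ((hasDerivAt_id' p).fun_mul hlog).congr_deriv ?_
  rw [Function.comp_apply, sqrt_div_sub_one_sq_sub_one hp]
  field_simp

end DivSubOne

/-- The best-reply power `S(I)` of Eq. (17), as a function of the interference `I`, with sigmoid
parameters `α` and `β`, attenuation `a`, price `ξ` and noise power `N`. -/
noncomputable def bestReply (α β a ξ N I : ℝ) : ℝ :=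
  -((I + N) / (α * a)) *
    (log (α / (2 * ξ * (I + N)) - 1 - √((1 - α / (2 * ξ * (I + N))) ^ 2 - 1)) - α * β)

theorem bestReply_eq_sub {α ξ : ℝ} (hα : α ≠ 0) (hξ : ξ ≠ 0) (β a N I : ℝ) :
    bestReply α β a ξ N I =
      (β * (2 * ξ * (I + N)) -
        2 * ξ * (I + N) * log (α / (2 * ξ * (I + N)) - 1 -
          √((α / (2 * ξ * (I + N)) - 1) ^ 2 - 1)) / α) / (2 * ξ * a) := by
  rw [bestReply, sub_sq_comm]
  field_simp
  ring

theorem bestReply_hasDerivAt_interference_general {α a ξ N I : ℝ} (β : ℝ) (ha : a ≠ 0)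
    (hpos : 0 < 4 * ξ * (I + N)) (hlt : 4 * ξ * (I + N) < α) :
    HasDerivAt (bestReply α β a ξ N)
      (β / a - 1 / (a * √(α * (α - 4 * ξ * (I + N)))) -
        (1 / (α * a)) *
          log ((α / (2 * ξ * (I + N)) - 1) - √((α / (2 * ξ * (I + N)) - 1) ^ 2 - 1))) I := by
  have hα : 0 < α := hpos.trans hlt
  have hξ : ξ ≠ 0 := by
    rintro rfl
    simp at hpos
  have hp : HasDerivAt (fun J ↦ 2 * ξ * (J + N)) (2 * ξ) I := by
    simpa using ((hasDerivAt_id' I).add_const N).const_mul (2 * ξ)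
  have hlog := (hasDerivAt_mul_log_div_sub_one_sub_sqrt (c := α) (p := 2 * ξ * (I + N))
    (by linarith) (by linarith)).comp I hp
  have hS := ((hp.const_mul β).fun_sub (hlog.div_const α)).div_const (2 * ξ * a)
  rw [funext (bestReply_eq_sub hα.ne' hξ β a N)]
  refine hS.congr_deriv ?_
  have hfour : 2 * (2 * ξ * (I + N)) = 4 * ξ * (I + N) := by ring
  rw [hfour]
  field_simp
  ring

/-- The best-reply power, as a function of the interference `I`, is
differentiable with derivative given by Eq. (19) of the paper. -/
theorem bestReply_hasDerivAt_interference
    (α β a ξ N : ℝ) (hα : 0 < α) (ha : 0 < a) (hξ : 0 < ξ) (hN : 0 ≤ N)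
    (S : ℝ → ℝ)
    (hS : S = fun I => -((I + N) / (α * a)) *
      (Real.log (α / (2 * ξ * (I + N)) - 1 -
          Real.sqrt ((1 - α / (2 * ξ * (I + N))) ^ 2 - 1)) - α * β)) :
    ∀ I : ℝ, 0 < I + N → 0 < 4 * ξ * (I + N) → 4 * ξ * (I + N) < α →
      HasDerivAt S
        (β / a - 1 / (a * Real.sqrt (α * (α - 4 * ξ * (I + N)))) -
          (1 / (α * a)) *
            Real.log ((α / (2 * ξ * (I + N)) - 1) -
              Real.sqrt ((α / (2 * ξ * (I + N)) - 1) ^ 2 - 1))) I := by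
  subst hS
  exact fun _ _ hpos hlt ↦ bestReply_hasDerivAt_interference_general β ha.ne' hpos hlt
end

section
/- Let α > 0, β ∈ ℝ, a > 0, ξ > 0 and I + N > 0 be real numbers with 0 < 4ξ(I+N) < α, and let s_br = −((I+N)/(α·a))·(log(α/(2ξ(I+N)) − 1 − √((1 − α/(2ξ(I+N)))² − 1)) − α·β). Then the sigmoid utility evaluated at the best reply satisfies 1/(1 + exp(−α(a·s_br/(I+N) − β))) = (α + √(α² − 4αξ(I+N)))/(2α), which equals 2ξ(I+N)/(α − √(α² − 4αξ(I+N))) (Eq. (21) of the paper). -/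
/-!
Put `c = ξ (I + N)` and `t = α / (2 c) - 1`, so that `t ≥ 1` exactly when `4 c ≤ α`. The number
`t - √(t² - 1)` in the best reply is the inverse of `t + √(t² - 1)`, so its logarithm is
`-arcosh t`, and the best reply is the power at which the argument of the sigmoid is `arcosh t`.
The value `sigmoid (arcosh t)` is algebraic in `t`; it is the larger root of `α u² - α u + c = 0`,
the first-order condition `α u (1 - u) = c` for the utility `u` net of the price.
The second form of the value is the same root with the numerator rationalized.
-/

open Real

theorem log_sub_sqrt_sq_sub_one {t : ℝ} (ht : 1 ≤ t) : log (t - √(t ^ 2 - 1)) = -arcosh t := by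
  rw [← add_sqrt_self_sq_sub_one_inv ht, log_inv, arcosh]

theorem sigmoid_eq_one_add_exp_div (x : ℝ) : sigmoid x = (1 + exp x) / (2 * (1 + cosh x)) := by
  rw [sigmoid_def, cosh_eq, exp_neg]
  field_simp
  ring

theorem sigmoid_arcosh {t : ℝ} (ht : 1 ≤ t) :
    sigmoid (arcosh t) = (1 + t + √(t ^ 2 - 1)) / (2 * (1 + t)) := by
  rw [sigmoid_eq_one_add_exp_div, exp_arcosh ht, cosh_arcosh ht, add_assoc]

theorem one_le_div_two_mul_sub_one_iff {α c : ℝ} (hc : 0 < c) :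
    1 ≤ α / (2 * c) - 1 ↔ 4 * c ≤ α := by
  rw [le_sub_iff_add_le, le_div_iff₀ (by positivity)]
  ring_nf

theorem sqrt_div_two_mul_sub_one_sq_sub_one {α c : ℝ} (hc : 0 < c) :
    √((α / (2 * c) - 1) ^ 2 - 1) = √(discrim α α c) / (2 * c) := by
  have hsq : (α / (2 * c) - 1) ^ 2 - 1 = discrim α α c / (2 * c) ^ 2 := by
    rw [discrim]
    field_simp
    ring
  rw [hsq, sqrt_div' _ (sq_nonneg _), sqrt_sq (by positivity)]

theorem sigmoid_arcosh_eq_quadratic_root {α c : ℝ} (hc : 0 < c) (h : 4 * c ≤ α) :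
    sigmoid (arcosh (α / (2 * c) - 1)) = (α + √(discrim α α c)) / (2 * α) := by
  have hα : 0 < α := by linarith
  rw [sigmoid_arcosh ((one_le_div_two_mul_sub_one_iff hc).2 h),
    sqrt_div_two_mul_sub_one_sq_sub_one hc, add_sub_cancel]
  field_simp

theorem quadratic_root_eq_div_conjugate {a b c : ℝ} (ha : a ≠ 0) (hc : c ≠ 0)
    (h : 0 ≤ discrim a b c) :
    (b + √(discrim a b c)) / (2 * a) = 2 * c / (b - √(discrim a b c)) := by
  have hprod : (b + √(discrim a b c)) * (b - √(discrim a b c)) = 2 * c * (2 * a) := by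
    rw [← sq_sub_sq, sq_sqrt h, discrim]
    ring
  have hconj : b - √(discrim a b c) ≠ 0 := by
    refine right_ne_zero_of_mul (a := b + √(discrim a b c)) ?_
    rw [hprod]
    positivity
  rwa [div_eq_div_iff (by positivity) hconj]

/-- The sigmoid utility evaluated at the best-reply power equals
`(α + √(α² − 4αξ(I+N)))/(2α)`, which equals `2ξ(I+N)/(α − √(α² − 4αξ(I+N)))`
(Eq. (21) of the paper). -/
theorem sigmoid_at_bestReply
    (α β a ξ I N : ℝ) (hα : 0 < α) (ha : 0 < a) (hξ : 0 < ξ) (hIN : 0 < I + N)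
    (h0 : 0 < 4 * ξ * (I + N)) (hcond : 4 * ξ * (I + N) < α)
    (sbr : ℝ)
    (hsbr : sbr = -((I + N) / (α * a)) *
      (Real.log (α / (2 * ξ * (I + N)) - 1 -
          Real.sqrt ((1 - α / (2 * ξ * (I + N))) ^ 2 - 1)) - α * β)) :
    1 / (1 + Real.exp (-(α * (a * sbr / (I + N) - β)))) =
        (α + Real.sqrt (α ^ 2 - 4 * α * ξ * (I + N))) / (2 * α) ∧
      (α + Real.sqrt (α ^ 2 - 4 * α * ξ * (I + N))) / (2 * α) =
        2 * ξ * (I + N) / (α - Real.sqrt (α ^ 2 - 4 * α * ξ * (I + N))) := by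
  have hc : 0 < ξ * (I + N) := mul_pos hξ hIN
  have hle : 4 * (ξ * (I + N)) ≤ α := by linarith
  have ht : 1 ≤ α / (2 * (ξ * (I + N))) - 1 := (one_le_div_two_mul_sub_one_iff hc).2 hle
  have harg : α * (a * sbr / (I + N) - β) = arcosh (α / (2 * (ξ * (I + N))) - 1) := by
    rw [hsbr, mul_assoc 2 ξ, sub_sq_comm 1, log_sub_sqrt_sq_sub_one ht]
    field_simp
    ring
  have hdiscrim : α ^ 2 - 4 * α * ξ * (I + N) = discrim α α (ξ * (I + N)) := by
    rw [discrim, mul_assoc _ ξ]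
  have hdiscrim_nonneg : 0 ≤ discrim α α (ξ * (I + N)) := by
    calc
      0 ≤ α * (α - 4 * (ξ * (I + N))) := mul_nonneg hα.le (sub_nonneg.2 hle)
      _ = discrim α α (ξ * (I + N)) := by rw [discrim]; ring
  rw [harg, one_div, ← sigmoid_def, hdiscrim, mul_assoc 2 ξ]
  exact ⟨sigmoid_arcosh_eq_quadratic_root hc hle,
    quadratic_root_eq_div_conjugate hα.ne' hc.ne' hdiscrim_nonneg⟩
end

section
/- Let α > 0, a > 0 and β ∈ ℝ be real numbers, and define D(t) = β/a − 1/(a·√(α(α − 4t))) − (1/(α·a))·log(α/(2t) − 1 − √((α/(2t) − 1)² − 1)) for t ∈ (0, α/4). Then D(t) → +∞ as t → 0 from the right (Tendsto along nhdsWithin 0 (0, ∞) to atTop). -/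
open Filter

/-!
With `x = α / (2t) - 1`, the logarithm in `D` is `-arcosh x`, because `x - √(x² - 1)` is the
inverse of `x + √(x² - 1)`. As `t → 0⁺` we have `x → +∞`, so `-(1 / (αa)) log (⋯)` diverges to
`+∞`, while the remaining terms of `D` are continuous at `0`.
-/

open scoped Topology

theorem log_sub_sqrt_sq_sub_one_s16 {x : ℝ} (hx : 1 ≤ x) :
    Real.log (x - √(x ^ 2 - 1)) = -Real.arcosh x := by
  rw [← Real.add_sqrt_self_sq_sub_one_inv hx, Real.log_inv, Real.arcosh]

theorem tendsto_arcosh_atTop : Tendsto Real.arcosh atTop atTop :=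
  Real.tendsto_log_atTop.comp <|
    tendsto_atTop_mono (fun _ => le_add_of_nonneg_right (Real.sqrt_nonneg _)) tendsto_id

theorem tendsto_log_sub_sqrt_sq_sub_one_atBot :
    Tendsto (fun x : ℝ => Real.log (x - √(x ^ 2 - 1))) atTop atBot := by
  refine (tendsto_neg_atTop_atBot.comp tendsto_arcosh_atTop).congr' ?_
  filter_upwards [eventually_ge_atTop 1] with x hx
  exact (log_sub_sqrt_sq_sub_one_s16 hx).symm

theorem tendsto_const_div_nhdsGT_zero {𝕜 : Type*} [Field 𝕜] [LinearOrder 𝕜]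
    [IsStrictOrderedRing 𝕜] [TopologicalSpace 𝕜] [OrderTopology 𝕜] {c : 𝕜} (hc : 0 < c) :
    Tendsto (fun x => c / x) (𝓝[>] 0) atTop := by
  simpa only [div_eq_mul_inv] using tendsto_inv_nhdsGT_zero.const_mul_atTop hc

theorem continuousAt_one_div_mul_sqrt {α a t : ℝ} (ha : a ≠ 0) (ht : 0 < α * (α - 4 * t)) :
    ContinuousAt (fun s => 1 / (a * √(α * (α - 4 * s)))) t :=
  continuousAt_const.div (by fun_prop) (mul_ne_zero ha (Real.sqrt_pos.2 ht).ne')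

/-- The derivative of the best-reply power with respect to interference
(Eq. (19)), as a function of `t = ξ(I+N)`, tends to `+∞` as `t → 0⁺`. -/
theorem bestReply_deriv_tendsto_atTop_at_zero
    (α a β : ℝ) (hα : 0 < α) (ha : 0 < a)
    (D : ℝ → ℝ)
    (hD : D = fun t => β / a - 1 / (a * Real.sqrt (α * (α - 4 * t))) -
      (1 / (α * a)) *
        Real.log (α / (2 * t) - 1 - Real.sqrt ((α / (2 * t) - 1) ^ 2 - 1))) :
    Tendsto D (nhdsWithin 0 (Set.Ioi 0)) atTop := by
  have arg_tendsto : Tendsto (fun t => α / (2 * t) - 1) (𝓝[>] 0) atTop := by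
    simpa only [div_div, sub_eq_add_neg] using
      tendsto_atTop_add_const_right _ (-1) (tendsto_const_div_nhdsGT_zero (half_pos hα))
  have log_term_tendsto := (tendsto_log_sub_sqrt_sq_sub_one_atBot.comp arg_tendsto).const_mul_atBot
    (by positivity : 0 < 1 / (α * a))
  have rest_continuousAt :
      ContinuousAt (fun t => β / a - 1 / (a * √(α * (α - 4 * t)))) 0 :=
    continuousAt_const.sub (continuousAt_one_div_mul_sqrt ha.ne' (by simpa using hα.ne'))
  have rest_tendsto := rest_continuousAt.tendsto.mono_left (nhdsWithin_le_nhds (s := Set.Ioi 0))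
  rw [hD]
  simpa only [sub_eq_add_neg, Function.comp_def] using
    rest_tendsto.add_atTop (tendsto_neg_atBot_atTop.comp log_term_tendsto)
end
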